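/- Let (A,B) be an invertible Jones pair of n×n complex matrices. Then: (i) N_{A,B} = {A∘F : F ∈ N_A}; (ii) {Θ_{A,B}(M)·Bᵀ : M ∈ N_{A,B}} = N_A; (iii) {Θ_{A,B}(M) : M ∈ N_{A,B}} = {Θ_{A,Bᵀ}(M)ᵀ : M ∈ N_{A,Bᵀ}} (i.e. the dual algebra N_{A,B}' equals the set of transposes of elements of N_{A,Bᵀ}'). -/

import Mathlib

open Matrix

variable {m : Type*} [Fintype m] [DecidableEq m]

/-- The Schur (entrywise) inverse `A^(-)` of a matrix: `(A^(-))_{ij} = (A_{ij})⁻¹`. -/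
noncomputable def sinv (A : Matrix m m ℂ) : Matrix m m ℂ := Matrix.of fun i j => (A i j)⁻¹

/-- A type-II matrix: a Schur invertible matrix `W` with `W * (W^(-))ᵀ = n • I`,
where `n` is the size of the matrix. -/
def IsTypeII (A : Matrix m m ℂ) : Prop :=
  (∀ i j, A i j ≠ 0) ∧ A * (sinv A)ᵀ = (Fintype.card m : ℂ) • (1 : Matrix m m ℂ)

/-- `v_{ij} = (A e_i) ∘ (B e_j)`: the entrywise product of column `i` of `A`
with column `j` of `B`. -/
def colProd (A B : Matrix m m ℂ) (i j : m) : m → ℂ := fun k => A k i * B k j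

/-- Membership in the Nomura algebra `N_{A,B}`: every `v_{ij}` is an eigenvector of `M`. -/
def InNomura (A B M : Matrix m m ℂ) : Prop :=
  ∀ i j, ∃ c : ℂ, M.mulVec (colProd A B i j) = c • colProd A B i j

/-- `S = Θ_{A,B}(M)`: the matrix of eigenvalues, i.e. `M v_{ij} = S_{ij} v_{ij}` for all `i,j`. -/
def IsTheta (A B M S : Matrix m m ℂ) : Prop :=
  ∀ i j, M.mulVec (colProd A B i j) = S i j • colProd A B i j

/-- `(A,B)` is a Jones pair: `A` invertible, `B` Schur invertible, and
`X_A Δ_B X_A = Δ_B X_A Δ_B` and `X_A Δ_{Bᵀ} X_A = Δ_{Bᵀ} X_A Δ_{Bᵀ}`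
as operators on matrices. -/
def IsJonesPair (A B : Matrix m m ℂ) : Prop :=
  IsUnit A ∧ (∀ i j, B i j ≠ 0) ∧
  (∀ M : Matrix m m ℂ, A * (B ⊙ (A * M)) = B ⊙ (A * (B ⊙ M))) ∧
  (∀ M : Matrix m m ℂ, A * (Bᵀ ⊙ (A * M)) = Bᵀ ⊙ (A * (Bᵀ ⊙ M)))

/-- An invertible Jones pair: a Jones pair in which moreover `A` is Schur
invertible and `B` is invertible. -/
def IsInvertibleJonesPair (A B : Matrix m m ℂ) : Prop :=
  IsJonesPair A B ∧ (∀ i j, A i j ≠ 0) ∧ IsUnit B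

/-- `W` is a spin model: for some `d` with `d² = n`, `(d⁻¹ W, W^(-))` is an
invertible Jones pair. -/
def IsSpinModel (W : Matrix m m ℂ) : Prop :=
  ∃ d : ℂ, d ^ 2 = (Fintype.card m : ℂ) ∧ IsInvertibleJonesPair (d⁻¹ • W) (sinv W)

/-- Given an invertible Jones pair `(A,B)` with `A` symmetric, `K` is paired with
`H ∈ N_{A,B}` if `Kᵀ ∈ N_{A,Bᵀ}` and `Θ_{A,B}(H) = (Θ_{A,Bᵀ}(Kᵀ))ᵀ`. -/
def Paired (A B H K : Matrix m m ℂ) : Prop :=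
  ∃ S : Matrix m m ℂ, IsTheta A B H S ∧ IsTheta A Bᵀ Kᵀ Sᵀ

/-- The `4n × 4n` matrix with `4 × 4` block structure
`[[P, Q, R, R], [Q, P, R, R], [S, S, T, U], [S, S, U, T]]`. -/
def blockMat {n : ℕ} (P Q R S T U : Matrix (Fin n) (Fin n) ℂ) :
    Matrix (Fin 4 × Fin n) (Fin 4 × Fin n) ℂ :=
  Matrix.of fun x y =>
    (![![P, Q, R, R], ![Q, P, R, R], ![S, S, T, U], ![S, S, U, T]] x.1 y.1) x.2 y.2

/-- Yamada's `4n × 4n` matrix `V` built from `A`, `B` and `d` with `d² = n`. -/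
noncomputable def Vmat {n : ℕ} (A B : Matrix (Fin n) (Fin n) ℂ) (d : ℂ) :
    Matrix (Fin 4 × Fin n) (Fin 4 × Fin n) ℂ :=
  blockMat (d • A) (-(d • A)) (sinv B) (sinv B)ᵀ (d • A) (-(d • A))


theorem theta_entry {A B M S : Matrix m m ℂ} : IsTheta A B M S ↔
    ∀ a i j, ∑ k, M a k * (A k i * B k j) = S i j * (A a i * B a j) := by
  constructor
  · intro h a i j
    have := congrFun (h i j) a
    simpa [Matrix.mulVec, dotProduct, colProd] using this
  · intro h i j
    funext a
    simpa [Matrix.mulVec, dotProduct, colProd] using h a i j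

theorem nomura_iff {A B M : Matrix m m ℂ} : InNomura A B M ↔ ∃ S, IsTheta A B M S := by
  constructor
  · intro h
    choose S hS using h
    exact ⟨Matrix.of S, hS⟩
  · rintro ⟨S, hS⟩ i j
    exact ⟨S i j, hS i j⟩

/-- column form -/
theorem theta_col {A B M S : Matrix m m ℂ} : IsTheta A B M S ↔
    ∀ j, M * (diagonal (fun k => B k j) * A) =
      diagonal (fun k => B k j) * A * diagonal (fun i => S i j) := by
  rw [theta_entry]
  constructor
  · intro h j
    ext a i
    rw [Matrix.mul_apply, Matrix.mul_diagonal, Matrix.diagonal_mul]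
    simp only [Matrix.diagonal_mul]
    have := h a i j
    rw [show B a j * A a i * S i j = S i j * (A a i * B a j) by ring, ← this]
    exact Finset.sum_congr rfl fun k _ => by ring
  · intro h a i j
    have := congrFun (congrFun (h j) a) i
    rw [Matrix.mul_apply, Matrix.mul_diagonal, Matrix.diagonal_mul] at this
    simp only [Matrix.diagonal_mul] at this
    rw [show S i j * (A a i * B a j) = B a j * A a i * S i j by ring, ← this]
    exact Finset.sum_congr rfl fun k _ => by ring

/-- row form -/
theorem theta_row {A B M S : Matrix m m ℂ} : IsTheta A B M S ↔
    ∀ a, Aᵀ * (diagonal (M a) * B) = diagonal (A a) * S * diagonal (B a) := by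
  rw [theta_entry]
  constructor
  · intro h a
    ext i j
    rw [Matrix.mul_apply, Matrix.mul_diagonal, Matrix.diagonal_mul]
    simp only [Matrix.diagonal_mul, Matrix.transpose_apply]
    have := h a i j
    rw [show A a i * S i j * B a j = S i j * (A a i * B a j) by ring, ← this]
    exact Finset.sum_congr rfl fun k _ => by ring
  · intro h a i j
    have := congrFun (congrFun (h a) i) j
    rw [Matrix.mul_apply, Matrix.mul_diagonal, Matrix.diagonal_mul] at this
    simp only [Matrix.diagonal_mul, Matrix.transpose_apply] at this
    rw [show S i j * (A a i * B a j) = A a i * S i j * B a j by ring, ← this]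
    exact Finset.sum_congr rfl fun k _ => by ring

theorem dg_inv {v : m → ℂ} (hv : ∀ i, v i ≠ 0) :
    diagonal v * diagonal (fun i => (v i)⁻¹) = 1 := by
  rw [Matrix.diagonal_mul_diagonal, ← Matrix.diagonal_one]
  congr 1; funext i; exact mul_inv_cancel₀ (hv i)

theorem dg_inv' {v : m → ℂ} (hv : ∀ i, v i ≠ 0) :
    diagonal (fun i => (v i)⁻¹) * diagonal v = 1 := by
  rw [Matrix.diagonal_mul_diagonal, ← Matrix.diagonal_one]
  congr 1; funext i; exact inv_mul_cancel₀ (hv i)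

theorem jp_swap {A B : Matrix m m ℂ} (h : IsInvertibleJonesPair A B) :
    IsInvertibleJonesPair A Bᵀ := by
  obtain ⟨⟨h1, h2, h3, h4⟩, h5, h6⟩ := h
  refine ⟨⟨h1, fun i j => h2 j i, h4, by simpa using h3⟩, h5, ?_⟩
  exact (Matrix.isUnit_transpose B).2 h6

theorem jp_theta {A B : Matrix m m ℂ} (h : IsInvertibleJonesPair A B) :
    IsTheta A B A B := by
  rw [theta_entry]
  intro a i j
  have := congrFun (congrFun (h.1.2.2.1 (Matrix.single i j 1)) a) j
  simp only [Matrix.mul_apply, Matrix.hadamard_apply, Matrix.single_apply] at this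
  simp only [and_true, mul_ite, mul_one, mul_zero, Finset.sum_ite_eq, Finset.mem_univ, if_true] at this
  rw [show B i j * (A a i * B a j) = B a j * (A a i * B i j) by ring, ← this]
  exact Finset.sum_congr rfl fun k _ => by ring

theorem minv_mul {A : Matrix m m ℂ} (h : IsUnit A) : A⁻¹ * A = 1 :=
  Matrix.nonsing_inv_mul A ((Matrix.isUnit_iff_isUnit_det A).1 h)

theorem mmul_inv {A : Matrix m m ℂ} (h : IsUnit A) : A * A⁻¹ = 1 :=
  Matrix.mul_nonsing_inv A ((Matrix.isUnit_iff_isUnit_det A).1 h)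

/-- `A D A⁻¹ = D⁻¹ A D`, entrywise -/
theorem jp_conj {A B : Matrix m m ℂ} (h : IsInvertibleJonesPair A B) (a i j : m) :
    ∑ k, A a k * A⁻¹ k i * B k j = A a i * B i j / B a j := by
  have hB := h.1.2.1
  have h1 := theta_col.1 (jp_theta h) j
  set D := diagonal (fun k => B k j) with hD
  have h2 : D * (A * (D * A⁻¹)) = A * D := by
    have : (D * A * D) * A⁻¹ = A * D := by
      rw [← h1, ← Matrix.mul_assoc, Matrix.mul_assoc _ A, mmul_inv h.1.1, Matrix.mul_one]
    simpa [Matrix.mul_assoc] using this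
  have h3 := congrFun (congrFun h2 a) i
  rw [hD, Matrix.diagonal_mul, Matrix.mul_diagonal, Matrix.mul_apply] at h3
  simp only [Matrix.diagonal_mul] at h3
  rw [eq_div_iff (hB a j), ← h3, mul_comm]
  congr 1
  exact Finset.sum_congr rfl fun k _ => by ring

theorem jp_diag {A B : Matrix m m ℂ} (h : IsInvertibleJonesPair A B) [Nonempty m] :
    (∀ a k, A a k * A⁻¹ k a = (Fintype.card m : ℂ)⁻¹) ∧
    (∀ a j, ∑ k, B k j = (Fintype.card m : ℂ) * A a a) := by
  have hn : (Fintype.card m : ℂ) ≠ 0 := by simp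
  have hB := h.1.2.1
  let u : m → ℂ := (fun _ => (1 : ℂ)) ᵥ* B⁻¹
  have hx : ∀ a k, A a k * A⁻¹ k a = A a a * u k := by
    intro a
    have h1 : (fun k => A a k * A⁻¹ k a) ᵥ* B = fun _ => A a a := by
      funext j
      have := jp_conj h a a j
      rw [mul_div_assoc, div_self (hB a j), mul_one] at this
      simpa [Matrix.vecMul, dotProduct] using this
    have h2 : (fun k => A a k * A⁻¹ k a) = (fun _ => A a a) ᵥ* B⁻¹ := by
      rw [← h1, Matrix.vecMul_vecMul, mmul_inv h.2.2, Matrix.vecMul_one]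
    intro k
    have := congrFun h2 k
    refine this.trans ?_
    simp [u, Matrix.vecMul, dotProduct, Finset.mul_sum]
  have hrow : ∀ a, A a a * ∑ k, u k = 1 := by
    intro a
    rw [Finset.mul_sum, ← Finset.sum_congr rfl fun k _ => hx a k]
    have := congrFun (congrFun (mmul_inv h.1.1) a) a
    simpa [Matrix.mul_apply] using this
  have hs : (∑ k, u k) ≠ 0 := by
    obtain ⟨a⟩ := ‹Nonempty m›
    intro h0
    have := hrow a
    simp [h0] at this
  have hc : ∀ a b, A a a = A b b := fun a b =>
    mul_right_cancel₀ hs ((hrow a).trans (hrow b).symm)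
  have hcol : ∀ a k, (Fintype.card m : ℂ) * (A a a * u k) = 1 := by
    intro a k
    have h1 := congrFun (congrFun (minv_mul h.1.1) k) k
    rw [Matrix.mul_apply, Matrix.one_apply_eq] at h1
    rw [← h1]
    have : ∀ x ∈ Finset.univ, A⁻¹ k x * A x k = A a a * u k := by
      intro x _
      rw [mul_comm, hx, hc x a]
    rw [Finset.sum_congr rfl this]
    simp
  have hA : ∀ a k, A a k * A⁻¹ k a = (Fintype.card m : ℂ)⁻¹ := by
    intro a k
    rw [hx]
    exact eq_inv_of_mul_eq_one_right (hcol a k)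
  refine ⟨hA, fun a j => ?_⟩
  have := jp_conj h a a j
  rw [mul_div_assoc, div_self (hB a j), mul_one] at this
  rw [← this]
  simp only [hA]
  rw [← Finset.mul_sum, ← mul_assoc, mul_inv_cancel₀ hn, one_mul]

theorem jp_Ainv {A B : Matrix m m ℂ} (h : IsInvertibleJonesPair A B) [Nonempty m] (k i : m) :
    A⁻¹ k i = (Fintype.card m : ℂ)⁻¹ * (A i k)⁻¹ := by
  rw [← (jp_diag h).1 i k]
  have := h.2.1 i k
  field_simp

theorem jp_rowsum {A B : Matrix m m ℂ} (h : IsInvertibleJonesPair A B) [Nonempty m] (a i : m) :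
    ∑ k, B i k = (Fintype.card m : ℂ) * A a a := (jp_diag (jp_swap h)).2 a i

theorem jp_Binv {A B : Matrix m m ℂ} (h : IsInvertibleJonesPair A B) [Nonempty m] (k i : m) :
    B⁻¹ k i = (Fintype.card m : ℂ)⁻¹ * (B i k)⁻¹ := by
  have hn : (Fintype.card m : ℂ) ≠ 0 := by simp
  have hB := h.1.2.1
  have key : B * (Matrix.of fun k i => (Fintype.card m : ℂ)⁻¹ * (B i k)⁻¹) = 1 := by
    ext i a
    rw [Matrix.mul_apply]
    have h1 : A a i * ∑ j, B i j / B a j =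
        (Fintype.card m : ℂ) * A a a * (1 : Matrix m m ℂ) a i := by
      rw [Finset.mul_sum]
      have : ∀ j ∈ Finset.univ, A a i * (B i j / B a j) = ∑ k, A a k * A⁻¹ k i * B k j := by
        intro j _
        rw [jp_conj h, mul_div_assoc]
      rw [Finset.sum_congr rfl this, Finset.sum_comm]
      simp only [← Finset.mul_sum, jp_rowsum h a]
      rw [← Finset.sum_mul, ← Matrix.mul_apply, mmul_inv h.1.1, mul_comm]
    have h2 : ∑ j, B i j * (Matrix.of fun k i => (Fintype.card m : ℂ)⁻¹ * (B i k)⁻¹) j a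
        = (Fintype.card m : ℂ)⁻¹ * ∑ j, B i j / B a j := by
      rw [Finset.mul_sum]
      refine Finset.sum_congr rfl fun j _ => ?_
      simp only [Matrix.of_apply]
      ring
    rw [h2]
    by_cases hia : i = a
    · subst hia
      rw [Matrix.one_apply_eq] at h1 ⊢
      have := h.2.1 i i
      have h3 : ∑ j, B i j / B i j = (Fintype.card m : ℂ) := by
        apply mul_left_cancel₀ this
        rw [h1]; ring
      rw [h3, inv_mul_cancel₀ hn]
    · rw [Matrix.one_apply_ne (Ne.symm hia), mul_zero] at h1
      rw [Matrix.one_apply_ne hia, (mul_eq_zero.1 h1).resolve_left (h.2.1 a i), mul_zero]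
  rw [Matrix.inv_eq_right_inv key]
  rfl

theorem sinv_eq {A B : Matrix m m ℂ} (h : IsInvertibleJonesPair A B) [Nonempty m] :
    sinv A = (Fintype.card m : ℂ) • (A⁻¹)ᵀ := by
  have hn : (Fintype.card m : ℂ) ≠ 0 := by simp
  ext i j
  simp only [sinv, Matrix.of_apply, Matrix.smul_apply, Matrix.transpose_apply, smul_eq_mul]
  rw [jp_Ainv h, ← mul_assoc, mul_inv_cancel₀ hn, one_mul]

theorem diag_unit {v : m → ℂ} (hv : ∀ i, v i ≠ 0) : IsUnit (diagonal v) :=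
  IsUnit.of_mul_eq_one _ (dg_inv hv)

/-- the key equivalence behind (i) -/
theorem key_i {A B F S : Matrix m m ℂ} (h : IsInvertibleJonesPair A B) [Nonempty m] :
    IsTheta A B (A ⊙ F) S ↔ IsTheta A (sinv A) F ((Fintype.card m : ℂ) • (S * B⁻¹)) := by
  have hn : (Fintype.card m : ℂ) ≠ 0 := by simp
  rw [theta_row, theta_row]
  refine forall_congr' fun a => ?_
  have hJ := theta_row.1 (jp_theta h) a
  have hd : diagonal ((A ⊙ F) a) = diagonal (F a) * diagonal (A a) := by
    rw [Matrix.diagonal_mul_diagonal]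
    congr 1; funext k; rw [Matrix.hadamard_apply, mul_comm]
  have hs : diagonal (sinv A a) = diagonal (fun k => (A a k)⁻¹) := rfl
  rw [hd, hs, sinv_eq h]
  have uA := diag_unit (h.2.1 a)
  have uB := diag_unit (h.1.2.1 a)
  have e1 := dg_inv' (h.2.1 a)
  have hT : (A⁻¹)ᵀ * Aᵀ = 1 := by rw [← Matrix.transpose_mul, mmul_inv h.1.1, Matrix.transpose_one]
  -- multiply the right hand side by `diagonal (A a) * B * diagonal (B a)`
  have u : IsUnit (diagonal (A a) * (B * diagonal (B a))) := uA.mul (h.2.2.mul uB)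
  rw [← u.mul_left_inj (b := Aᵀ * (diagonal (F a) * (Fintype.card m : ℂ) • (A⁻¹)ᵀ))]
  have hJ' : (A⁻¹)ᵀ * (diagonal (A a) * (B * diagonal (B a))) = diagonal (A a) * B := by
    rw [← Matrix.mul_assoc (diagonal (A a)), ← hJ, ← Matrix.mul_assoc, hT, Matrix.one_mul]
  have l1 : Aᵀ * (diagonal (F a) * (Fintype.card m : ℂ) • (A⁻¹)ᵀ) *
      (diagonal (A a) * (B * diagonal (B a))) =
      (Fintype.card m : ℂ) • (Aᵀ * (diagonal (F a) * diagonal (A a) * B)) := by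
    simp only [Matrix.mul_smul, Matrix.smul_mul, Matrix.mul_assoc]
    rw [hJ']
  have l2 : diagonal (A a) * (Fintype.card m : ℂ) • (S * B⁻¹) * diagonal (fun k => (A a k)⁻¹) *
      (diagonal (A a) * (B * diagonal (B a))) =
      (Fintype.card m : ℂ) • (diagonal (A a) * S * diagonal (B a)) := by
    simp only [Matrix.mul_smul, Matrix.smul_mul, Matrix.mul_assoc]
    rw [← Matrix.mul_assoc _ (diagonal (A a)), e1, Matrix.one_mul, ← Matrix.mul_assoc B⁻¹,
      minv_mul h.2.2, Matrix.one_mul]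
  rw [l1, l2]
  constructor
  · intro hh; rw [hh]
  · intro hh; exact smul_right_injective _ hn hh

theorem key_i' {A B F : Matrix m m ℂ} (h : IsInvertibleJonesPair A B) [Nonempty m] :
    InNomura A B (A ⊙ F) ↔ InNomura A (sinv A) F := by
  have hn : (Fintype.card m : ℂ) ≠ 0 := by simp
  rw [nomura_iff, nomura_iff]
  constructor
  · rintro ⟨S, hS⟩
    exact ⟨_, (key_i h).1 hS⟩
  · rintro ⟨G, hG⟩
    refine ⟨(Fintype.card m : ℂ)⁻¹ • (G * B), (key_i h).2 ?_⟩
    rw [Matrix.smul_mul, Matrix.mul_assoc, mmul_inv h.2.2, Matrix.mul_one, smul_smul,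
      mul_inv_cancel₀ hn, one_smul]
    exact hG

theorem had_div {A : Matrix m m ℂ} (hA : ∀ i j, A i j ≠ 0) (M : Matrix m m ℂ) :
    A ⊙ (sinv A ⊙ M) = M := by
  ext i j
  simp [sinv, hA i j]

/-- closure under transposition -/
theorem nom_transpose {A B F : Matrix m m ℂ} (h : IsInvertibleJonesPair A B) [Nonempty m]
    (hF : InNomura A (sinv A) F) : InNomura A (sinv A) Fᵀ := by
  have hn : (Fintype.card m : ℂ) ≠ 0 := by simp
  obtain ⟨G, hG⟩ := nomura_iff.1 hF
  refine nomura_iff.2 ⟨Gᵀ, theta_entry.2 fun a j i => ?_⟩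
  have h1 := theta_col.1 hG j
  set D := diagonal (fun k => sinv A k j) with hD
  set E := diagonal (fun k => A k j) with hE
  set T := diagonal (fun i => G i j) with hT
  have hED : E * D = 1 := dg_inv (fun k => h.2.1 k j)
  have hDE : D * E = 1 := dg_inv' (fun k => h.2.1 k j)
  have hAT : Aᵀ * (A⁻¹)ᵀ = 1 := by rw [← Matrix.transpose_mul, minv_mul h.1.1, Matrix.transpose_one]
  have hTA : (A⁻¹)ᵀ * Aᵀ = 1 := by rw [← Matrix.transpose_mul, mmul_inv h.1.1, Matrix.transpose_one]
  have h2 : Aᵀ * D * Fᵀ = T * (Aᵀ * D) := by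
    have := congrArg Matrix.transpose h1
    simpa [Matrix.transpose_mul, hD, hT, Matrix.diagonal_transpose] using this
  have h3 : Fᵀ * (E * (A⁻¹)ᵀ) = E * (A⁻¹)ᵀ * T := by
    calc Fᵀ * (E * (A⁻¹)ᵀ) = (E * (((A⁻¹)ᵀ * Aᵀ) * D)) * Fᵀ * (E * (A⁻¹)ᵀ) := by
          rw [hTA, Matrix.one_mul, hED, Matrix.one_mul]
      _ = E * (A⁻¹)ᵀ * (Aᵀ * D * Fᵀ) * (E * (A⁻¹)ᵀ) := by simp only [Matrix.mul_assoc]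
      _ = E * (A⁻¹)ᵀ * T * (Aᵀ * ((D * E) * (A⁻¹)ᵀ)) := by rw [h2]; simp only [Matrix.mul_assoc]
      _ = _ := by rw [hDE, Matrix.one_mul, hAT, Matrix.mul_one]
  have h4 := congrFun (congrFun h3 a) i
  rw [Matrix.mul_apply, hT, Matrix.mul_diagonal, hE] at h4
  simp only [Matrix.diagonal_mul, Matrix.transpose_apply, jp_Ainv h] at h4
  simp only [sinv, Matrix.of_apply, Matrix.transpose_apply]
  apply mul_left_cancel₀ (inv_ne_zero hn)
  rw [Finset.mul_sum]
  calc _ = _ := Finset.sum_congr rfl fun k _ => by ring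
    _ = _ := h4
    _ = _ := by ring

theorem theta_mul_A {A B M S : Matrix m m ℂ} (h : IsInvertibleJonesPair A B)
    (hM : IsTheta A B M S) : IsTheta A B (M * A) (S ⊙ B) := by
  rw [theta_col] at hM ⊢
  intro j
  have h1 := theta_col.1 (jp_theta h) j
  have hd : diagonal (fun i => (S ⊙ B) i j) = diagonal (fun i => S i j) * diagonal (fun i => B i j) := by
    rw [Matrix.diagonal_mul_diagonal]; rfl
  rw [Matrix.mul_assoc, h1, ← Matrix.mul_assoc, hM j, hd, Matrix.mul_assoc _ (diagonal _) (diagonal _)]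

theorem theta_div_A {A B M S : Matrix m m ℂ} (h : IsInvertibleJonesPair A B)
    (hM : IsTheta A B M S) : IsTheta A B (M * A⁻¹) (S ⊙ sinv B) := by
  rw [theta_col] at hM ⊢
  intro j
  have h1 := theta_col.1 (jp_theta h) j
  have hd : diagonal (fun i => (S ⊙ sinv B) i j) =
      diagonal (fun i => S i j) * diagonal (fun i => (B i j)⁻¹) := by
    rw [Matrix.diagonal_mul_diagonal]; rfl
  have e := dg_inv (fun k => h.1.2.1 k j)
  have h2 : A⁻¹ * (diagonal (fun k => B k j) * A) =
      diagonal (fun k => B k j) * A * diagonal (fun i => (B i j)⁻¹) := by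
    calc _ = A⁻¹ * (diagonal (fun k => B k j) * A *
          (diagonal (fun k => B k j) * diagonal (fun i => (B i j)⁻¹))) := by
            rw [e, Matrix.mul_one]
      _ = A⁻¹ * (diagonal (fun k => B k j) * A * diagonal (fun k => B k j)) *
          diagonal (fun i => (B i j)⁻¹) := by simp only [Matrix.mul_assoc]
      _ = _ := by
        rw [← h1, ← Matrix.mul_assoc A⁻¹, minv_mul h.1.1, Matrix.one_mul]
  rw [Matrix.mul_assoc, h2, ← Matrix.mul_assoc, hM j, hd, Matrix.mul_assoc _ (diagonal _) (diagonal _)]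

theorem theta_sum {A B M S : Matrix m m ℂ} (h : IsInvertibleJonesPair A B) [Nonempty m]
    (hM : IsTheta A B M S) (b a i : m) :
    (Fintype.card m : ℂ) * A b b * (M * A) a i = A a i * (S * Bᵀ) i a := by
  have h1 : ∑ j, ∑ k, M a k * (A k i * B k j) = ∑ j, S i j * (A a i * B a j) :=
    Finset.sum_congr rfl fun j _ => theta_entry.1 hM a i j
  rw [Finset.sum_comm] at h1
  simp only [← Finset.mul_sum, jp_rowsum h b] at h1
  rw [Matrix.mul_apply, Matrix.mul_apply, Finset.mul_sum, Finset.mul_sum]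
  calc _ = _ := Finset.sum_congr rfl fun k _ => by ring
    _ = _ := h1
    _ = _ := Finset.sum_congr rfl fun k _ => by rw [Matrix.transpose_apply]; ring

theorem theta_smul {A B M S : Matrix m m ℂ} (c : ℂ) (hM : IsTheta A B M S) :
    IsTheta A B (c • M) (c • S) := by
  intro i j
  rw [Matrix.smul_mulVec, hM i j, Matrix.smul_apply, smul_smul, smul_eq_mul]

theorem nom_smul {A B M : Matrix m m ℂ} (c : ℂ) (hM : InNomura A B M) :
    InNomura A B (c • M) := by
  obtain ⟨S, hS⟩ := nomura_iff.1 hM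
  exact nomura_iff.2 ⟨_, theta_smul c hS⟩

/-- (ii) -/
theorem part_ii {A B S : Matrix m m ℂ} (h : IsInvertibleJonesPair A B) [Nonempty m] :
    (∃ M, IsTheta A B M S) ↔ InNomura A (sinv A) (S * Bᵀ) := by
  have hn : (Fintype.card m : ℂ) ≠ 0 := by simp
  obtain ⟨b⟩ := id ‹Nonempty m›
  have hr : (Fintype.card m : ℂ) * A b b ≠ 0 := mul_ne_zero hn (h.2.1 b b)
  have formula : ∀ M S', IsTheta A B M S' →
      S' * Bᵀ = (((Fintype.card m : ℂ) * A b b) • (sinv A ⊙ (M * A)))ᵀ := by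
    intro M S' hM
    ext i a
    have := theta_sum h hM b a i
    have hA := h.2.1 a i
    simp only [Matrix.transpose_apply, Matrix.smul_apply, Matrix.hadamard_apply, sinv,
      Matrix.of_apply, smul_eq_mul]
    rw [mul_left_comm, this, inv_mul_cancel_left₀ hA]
  constructor
  · rintro ⟨M, hM⟩
    rw [formula M S hM]
    apply nom_transpose h
    apply nom_smul
    rw [← key_i' h, had_div h.2.1]
    exact nomura_iff.2 ⟨_, theta_mul_A h hM⟩
  · intro hF
    have h1 := (key_i' h).2 (nom_transpose h hF)
    obtain ⟨S0, hS0⟩ := nomura_iff.1 h1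
    have h2 := theta_smul ((Fintype.card m : ℂ) * A b b)⁻¹ (theta_div_A h hS0)
    have h3 := formula _ _ h2
    refine ⟨((Fintype.card m : ℂ) * A b b)⁻¹ • ((A ⊙ (S * Bᵀ)ᵀ) * A⁻¹), ?_⟩
    · have h4 : (((Fintype.card m : ℂ) * A b b) • (sinv A ⊙
          ((((Fintype.card m : ℂ) * A b b)⁻¹ • ((A ⊙ (S * Bᵀ)ᵀ) * A⁻¹)) * A)))ᵀ = S * Bᵀ := by
        rw [Matrix.smul_mul, Matrix.mul_assoc, minv_mul h.1.1, Matrix.mul_one]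
        ext i a
        have hA := h.2.1 a i
        simp only [Matrix.transpose_apply, Matrix.smul_apply, Matrix.hadamard_apply, sinv,
          Matrix.of_apply, smul_eq_mul]
        have hbb := h.2.1 b b
        field_simp
      rw [h4] at h3
      have h5 := ((Matrix.isUnit_transpose B).2 h.2.2).mul_left_injective h3
      rw [h5] at h2
      exact h2

/-- gauge symmetry of `A` -/
theorem jp_gauge {A B : Matrix m m ℂ} (h : IsInvertibleJonesPair A B) (a k i : m) :
    A a k * A k i * A i a = A i k * A k a * A a i := by
  have h1 : ∀ a i, (fun k => A a k * A k i) ᵥ* B = fun j => B i j * (A a i * B a j) := by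
    intro a i
    funext j
    rw [← theta_entry.1 (jp_theta h) a i j]
    simp [Matrix.vecMul, dotProduct, mul_assoc]
  have h2 : ((A i a) • fun k => A a k * A k i) ᵥ* B = ((A a i) • fun k => A i k * A k a) ᵥ* B := by
    rw [Matrix.smul_vecMul, Matrix.smul_vecMul, h1, h1]
    funext j
    simp only [Pi.smul_apply, smul_eq_mul]
    ring
  have h3 := congrArg (fun v => v ᵥ* B⁻¹) h2
  simp only [Matrix.vecMul_vecMul, mmul_inv h.2.2, Matrix.vecMul_one] at h3
  have := congrFun h3 k
  simp only [Pi.smul_apply, smul_eq_mul] at this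
  rw [mul_comm, this, mul_comm]

/-- `B⁻¹` normalises `N_A` -/
theorem nom_conj {A B F : Matrix m m ℂ} (h : IsInvertibleJonesPair A B) [Nonempty m]
    (hF : InNomura A (sinv A) F) : InNomura A (sinv A) (B⁻¹ * F * B) := by
  have hn : (Fintype.card m : ℂ) ≠ 0 := by simp
  have hB := h.1.2.1
  obtain ⟨S, hS⟩ := nomura_iff.1 ((key_i' h).2 hF)
  -- `F` lies in `N_B`
  have s1 : ∀ a, diagonal (B a) * (B⁻¹ * (diagonal (F a) * B)) = B⁻¹ * S * diagonal (B a) := by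
    intro a
    have hJ := theta_row.1 (jp_theta h) a
    have hM := theta_row.1 hS a
    have hd : diagonal ((A ⊙ F) a) = diagonal (A a) * diagonal (F a) := by
      rw [Matrix.diagonal_mul_diagonal]; rfl
    have uA := diag_unit (h.2.1 a)
    apply (uA.mul h.2.2).mul_right_injective
    simp only
    have e1 : diagonal (A a) * B * (B⁻¹ * S * diagonal (B a)) =
        diagonal (A a) * S * diagonal (B a) := by
      rw [← Matrix.mul_assoc, ← Matrix.mul_assoc, Matrix.mul_assoc _ B, mmul_inv h.2.2,
        Matrix.mul_one]
    rw [e1, ← hM, hd, ← Matrix.mul_assoc (diagonal (A a) * B), ← hJ]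
    simp only [Matrix.mul_assoc]
    rw [← Matrix.mul_assoc B, mmul_inv h.2.2, Matrix.one_mul]
  have s2 : ∀ a i j, ∑ k, F a k * ((B k i)⁻¹ * B k j) =
      (B a i)⁻¹ * B a j * ((Fintype.card m : ℂ) * (B⁻¹ * S) i j) := by
    intro a i j
    have := congrFun (congrFun (s1 a) i) j
    rw [Matrix.diagonal_mul, Matrix.mul_diagonal, Matrix.mul_apply] at this
    simp only [Matrix.diagonal_mul, jp_Binv h] at this
    have e : ∑ k, (Fintype.card m : ℂ)⁻¹ * (B k i)⁻¹ * (F a k * B k j) =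
        (Fintype.card m : ℂ)⁻¹ * ∑ k, F a k * ((B k i)⁻¹ * B k j) := by
      rw [Finset.mul_sum]
      exact Finset.sum_congr rfl fun k _ => by ring
    rw [e] at this
    have hb := hB a i
    field_simp at this ⊢
    rw [this]
  -- matrix form
  have s3 : ∀ i, F * (diagonal (fun k => (B k i)⁻¹) * B) =
      diagonal (fun k => (B k i)⁻¹) * B *
        diagonal (fun j => (Fintype.card m : ℂ) * (B⁻¹ * S) i j) := by
    intro i
    ext a j
    rw [Matrix.mul_apply, Matrix.mul_diagonal, Matrix.diagonal_mul, ← s2]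
    simp only [Matrix.diagonal_mul]
  have s4 : ∀ a, B * (diagonal (A a) * A⁻¹) =
      diagonal (fun k => (B k a)⁻¹) * B * diagonal (A a) := by
    intro a
    ext j i
    have := jp_conj (jp_swap h) a i j
    rw [Matrix.mul_apply, Matrix.mul_diagonal, Matrix.diagonal_mul]
    simp only [Matrix.diagonal_mul]
    simp only [Matrix.transpose_apply] at this
    calc _ = _ := Finset.sum_congr rfl fun k _ => by ring
      _ = _ := this
      _ = _ := by ring
  refine nomura_iff.2 ⟨Matrix.of fun a j => (Fintype.card m : ℂ) * (B⁻¹ * S) a j,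
    theta_entry.2 fun x a i => ?_⟩
  set E := diagonal (fun j => (Fintype.card m : ℂ) * (B⁻¹ * S) a j) with hE
  have s5 : (B⁻¹ * F * B) * (diagonal (A a) * A⁻¹) = diagonal (A a) * A⁻¹ * E := by
    have hc : E * diagonal (A a) = diagonal (A a) * E := by
      rw [hE, Matrix.diagonal_mul_diagonal, Matrix.diagonal_mul_diagonal]
      congr 1; funext k; ring
    calc _ = B⁻¹ * (F * (B * (diagonal (A a) * A⁻¹))) := by simp only [Matrix.mul_assoc]
      _ = B⁻¹ * (F * (diagonal (fun k => (B k a)⁻¹) * B) * diagonal (A a)) := by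
        rw [s4]; simp only [Matrix.mul_assoc]
      _ = B⁻¹ * (diagonal (fun k => (B k a)⁻¹) * B * diagonal (A a) * E) := by
        rw [s3, Matrix.mul_assoc _ E, hc]; simp only [Matrix.mul_assoc]
      _ = (B⁻¹ * B) * (diagonal (A a) * A⁻¹ * E) := by
        rw [← s4]; simp only [Matrix.mul_assoc]
      _ = _ := by rw [minv_mul h.2.2, Matrix.one_mul]
  have s6 := congrFun (congrFun s5 x) i
  rw [Matrix.mul_apply, hE, Matrix.mul_diagonal] at s6
  simp only [Matrix.diagonal_mul, jp_Ainv h] at s6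
  simp only [sinv, Matrix.of_apply]
  have hA := h.2.1
  have g : ∀ k, A k a * (A k i)⁻¹ = ((Fintype.card m : ℂ) * A i a * (A a i)⁻¹) *
      (A a k * ((Fintype.card m : ℂ)⁻¹ * (A i k)⁻¹)) := by
    intro k
    have := jp_gauge h a k i
    have h1 := hA k i
    have h2 := hA a i
    have h3 := hA i k
    field_simp
    linear_combination -this
  simp only [g]
  calc _ = ((Fintype.card m : ℂ) * A i a * (A a i)⁻¹) * ∑ k, (B⁻¹ * F * B) x k *
        (A a k * ((Fintype.card m : ℂ)⁻¹ * (A i k)⁻¹)) := by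
        rw [Finset.mul_sum]
        exact Finset.sum_congr rfl fun k _ => by ring
    _ = _ := by rw [s6]; ring

theorem part_iii_half {A B S : Matrix m m ℂ} (h : IsInvertibleJonesPair A B) [Nonempty m]
    (hS : ∃ M, IsTheta A Bᵀ M Sᵀ) : ∃ M, IsTheta A B M S := by
  have h' := jp_swap h
  rw [part_ii h]
  have h1 := nom_conj h' (nom_transpose h ((part_ii h').1 hS))
  have e : (Bᵀ)⁻¹ * (Sᵀ * Bᵀᵀ)ᵀ * Bᵀ = S * Bᵀ := by
    rw [Matrix.transpose_mul, Matrix.transpose_transpose, Matrix.transpose_transpose,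
      ← Matrix.mul_assoc, minv_mul h'.2.2, Matrix.one_mul]
  rwa [e] at h1

theorem NAB_structure_of_invertible_jones_pair {n : ℕ} (hn : 0 < n)
    (A B : Matrix (Fin n) (Fin n) ℂ) (h : IsInvertibleJonesPair A B) :
    {M : Matrix (Fin n) (Fin n) ℂ | InNomura A B M} =
      {M : Matrix (Fin n) (Fin n) ℂ | ∃ F, InNomura A (sinv A) F ∧ M = A ⊙ F} ∧
    {P : Matrix (Fin n) (Fin n) ℂ | ∃ M S, IsTheta A B M S ∧ P = S * Bᵀ} =
      {F : Matrix (Fin n) (Fin n) ℂ | InNomura A (sinv A) F} ∧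
    {S : Matrix (Fin n) (Fin n) ℂ | ∃ M, IsTheta A B M S} =
      {P : Matrix (Fin n) (Fin n) ℂ | ∃ M S, IsTheta A Bᵀ M S ∧ P = Sᵀ} := by
  haveI : Nonempty (Fin n) := ⟨⟨0, hn⟩⟩
  refine ⟨?_, ?_, ?_⟩
  · ext M
    constructor
    · intro hM
      refine ⟨sinv A ⊙ M, ?_, (had_div h.2.1 M).symm⟩
      rw [← key_i' h, had_div h.2.1]
      exact hM
    · rintro ⟨F, hF, rfl⟩
      exact (key_i' h).2 hF
  · ext P
    constructor
    · rintro ⟨M, S, hS, rfl⟩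
      exact (part_ii h).1 ⟨M, hS⟩
    · intro hP
      have h' := jp_swap h
      have e : P * (Bᵀ)⁻¹ * Bᵀ = P := by
        rw [Matrix.mul_assoc, minv_mul h'.2.2, Matrix.mul_one]
      obtain ⟨M, hM⟩ := (part_ii (S := P * (Bᵀ)⁻¹) h).2 (by rw [e]; exact hP)
      exact ⟨M, _, hM, e.symm⟩
  · ext S
    constructor
    · intro hS
      have hS : ∃ M, IsTheta A B M S := hS
      obtain ⟨M, hM⟩ := part_iii_half (S := Sᵀ) (jp_swap h)
        (by simpa only [Matrix.transpose_transpose] using hS)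
      exact ⟨M, _, hM, (Matrix.transpose_transpose S).symm⟩
    · rintro ⟨M, S', hM, rfl⟩
      exact part_iii_half h ⟨M, by simpa only [Matrix.transpose_transpose] using hM⟩
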